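/- Let Γ be a symmetric coordination game on a finite simple graph G with c ≥ 1 colors and the equal-split distribution rule. Then for every pure Nash equilibrium s and every strategy profile s*, u(s*) ≤ (1 + 2·ρ(G))·u(s). -/

import Mathlib

open Finset
open scoped Classical

variable {V : Type*}

noncomputable def edgesIn [Fintype V] (G : SimpleGraph V) (S : Finset V) : ℕ :=
  (G.edgeFinset.filter fun e => ∀ v ∈ e, v ∈ S).card

noncomputable def maxDensity [Fintype V] (G : SimpleGraph V) : ℝ :=
  ⨆ S : {S : Finset V // S.Nonempty}, (edgesIn G S.1 : ℝ) / (S.1.card : ℝ)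

noncomputable def maxDisparity (G : SimpleGraph V) (α : V → V → ℝ) : ℝ :=
  ⨆ p : {p : V × V // G.Adj p.1 p.2}, α p.1.1 p.1.2 / α p.1.2 p.1.1

noncomputable def util [Fintype V] (G : SimpleGraph V) (coord : V → V → Prop)
    (α w : V → V → ℝ) {c : ℕ} (q : V → Fin c → ℝ) (s : V → Fin c) (i : V) : ℝ :=
  q i (s i) +
    ∑ j ∈ G.neighborFinset i,
      if (coord i j ∧ s i = s j) ∨ (¬ coord i j ∧ s i ≠ s j)
      then α i j / (α i j + α j i) * w i j else 0

noncomputable def welfare [Fintype V] (G : SimpleGraph V) (coord : V → V → Prop)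
    (α w : V → V → ℝ) {c : ℕ} (q : V → Fin c → ℝ) (s : V → Fin c) : ℝ :=
  ∑ i, util G coord α w q s i

def IsNash [Fintype V] (G : SimpleGraph V) (coord : V → V → Prop)
    (α w : V → V → ℝ) {c : ℕ} (q : V → Fin c → ℝ) (s : V → Fin c) : Prop :=
  ∀ (i : V) (k : Fin c),
    util G coord α w q (Function.update s i k) i ≤ util G coord α w q s i

noncomputable def utilA [Fintype V] (G : SimpleGraph V) (w : V → V → ℝ)
    {c : ℕ} (s : V → Fin c) (i : V) : ℝ :=
  ∑ j ∈ G.neighborFinset i, if s i = s j then w i j / 2 else 0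

noncomputable def welfareA [Fintype V] (G : SimpleGraph V) (w : V → V → ℝ)
    {c : ℕ} (s : V → Fin c) : ℝ :=
  ∑ i, utilA G w s i

def IsNashA [Fintype V] (G : SimpleGraph V) (w : V → V → ℝ)
    {c : ℕ} (St : V → Finset (Fin c)) (s : V → Fin c) : Prop :=
  ∀ i, ∀ k ∈ St i, utilA G w (Function.update s i k) i ≤ utilA G w s i

def IsEpsKEq [Fintype V] (G : SimpleGraph V) (w : V → V → ℝ)
    {c : ℕ} (St : V → Finset (Fin c)) (ε : ℝ) (k : ℕ) (s : V → Fin c) : Prop :=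
  ∀ K : Finset V, K.Nonempty → K.card ≤ k →
    ∀ s' : V → Fin c, (∀ i ∈ K, s' i ∈ St i) → (∀ i ∉ K, s' i = s i) →
      ∃ j ∈ K, utilA G w s' j ≤ ε * utilA G w s j

def IsGWS (G : SimpleGraph V) (α : V → V → ℝ) : Prop :=
  ∃ (σ : V → ℕ) (γ : V → ℝ), Function.Injective σ ∧ (∀ i, 0 ≤ γ i) ∧
    ∀ i j, G.Adj i j →
      (α i j = 0 → σ i < σ j) ∧
      (0 < α i j → α i j / (α i j + α j i) = γ i / (γ i + γ j))

def BRStep [Fintype V] (G : SimpleGraph V) (coord : V → V → Prop)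
    (α w : V → V → ℝ) {c : ℕ} (q : V → Fin c → ℝ) (s s' : V → Fin c) : Prop :=
  ∃ i, (∀ j, j ≠ i → s' j = s j) ∧
    util G coord α w q s i < util G coord α w q s' i ∧
    ∀ k : Fin c, util G coord α w q (Function.update s i k) i ≤ util G coord α w q s' i

lemma pairs_eq [Fintype V] (G : SimpleGraph V) (S : Finset V) :
    ∑ i, ∑ j ∈ G.neighborFinset i, (if i ∈ S ∧ j ∈ S then (1 : ℝ) else 0)
      = 2 * (edgesIn G S : ℝ) := by
  let H : SimpleGraph V :=
    { Adj := fun a b => G.Adj a b ∧ a ∈ S ∧ b ∈ S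
      symm := ⟨fun a b h => ⟨h.1.symm, h.2.2, h.2.1⟩⟩
      loopless := ⟨fun a h => G.loopless.irrefl a h.1⟩ }
  have h1 := H.sum_degrees_eq_twice_card_edges
  have h2 : H.edgeFinset = G.edgeFinset.filter fun e => ∀ v ∈ e, v ∈ S := by
    ext e
    induction e using Sym2.ind with
    | _ a b => simp [H]
  rw [h2] at h1
  have h3 : ∀ i, ∑ j ∈ G.neighborFinset i, (if i ∈ S ∧ j ∈ S then (1 : ℝ) else 0)
      = (H.degree i : ℝ) := by
    intro i
    rw [← Finset.sum_filter, Finset.sum_const, nsmul_eq_mul, mul_one,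
      ← SimpleGraph.card_neighborFinset_eq_degree]
    congr 2
    ext j
    simp [H]
  simp only [h3]
  unfold edgesIn
  exact_mod_cast h1

lemma edgesIn_le [Fintype V] (G : SimpleGraph V) (S : Finset V) (hS : S.Nonempty) :
    (edgesIn G S : ℝ) ≤ maxDensity G * S.card := by
  have h : (edgesIn G S : ℝ) / (S.card : ℝ) ≤ maxDensity G :=
    le_ciSup (f := fun S : {S : Finset V // S.Nonempty} =>
      (edgesIn G S.1 : ℝ) / (S.1.card : ℝ)) (Set.finite_range _).bddAbove ⟨S, hS⟩
  have hp : (0 : ℝ) < S.card := by exact_mod_cast hS.card_pos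
  exact (div_le_iff₀ hp).1 h

lemma min_sum_le [Fintype V] (G : SimpleGraph V) (n : ℕ) : ∀ (x : V → ℝ), (∀ i, 0 ≤ x i) →
    (univ.filter fun i => 0 < x i).card = n →
    ∑ i, ∑ j ∈ G.neighborFinset i, min (x i) (x j) ≤ 2 * maxDensity G * ∑ i, x i := by
  induction n using Nat.strong_induction_on with
  | _ n ih =>
  intro x hx hn
  set S := univ.filter fun i => 0 < x i with hS
  have memS : ∀ i, i ∈ S ↔ 0 < x i := by simp [hS]
  by_cases hne : S.Nonempty
  · obtain ⟨k, hk, hmin⟩ := S.exists_min_image x hne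
    have hkpos := (memS k).1 hk
    let y : V → ℝ := fun i => if i ∈ S then x i - x k else 0
    have hxy : ∀ i, x i = y i + x k * (if i ∈ S then 1 else 0) := by
      intro i
      by_cases hi : i ∈ S
      · simp [y, hi]
      · have := (memS i).not.1 hi
        have := hx i
        simp [y, hi]; linarith
    have hy : ∀ i, 0 ≤ y i := by
      intro i
      by_cases hi : i ∈ S
      · simpa [y, hi] using hmin i hi
      · simp [y, hi]
    have hlt : (univ.filter fun i => 0 < y i).card < n := by
      rw [← hn]
      apply Finset.card_lt_card
      rw [Finset.ssubset_iff_of_subset]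
      · exact ⟨k, hk, by simp [y]⟩
      · intro i hi
        by_contra h
        simp [y, h] at hi
    have key := ih _ hlt y hy rfl
    have hmm : ∀ i j, min (x i) (x j) =
        min (y i) (y j) + x k * (if i ∈ S ∧ j ∈ S then (1 : ℝ) else 0) := by
      intro i j
      have hi0 := hy i
      have hj0 := hy j
      rw [hxy i, hxy j]
      have hz : ∀ i, i ∉ S → y i = 0 := fun i h => by simp [y, h]
      by_cases hi : i ∈ S <;> by_cases hj : j ∈ S
      · simp [hi, hj, min_add_add_right]
      · simp only [hi, hj, hz j hj]
        simp [hi0]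
        linarith
      · simp only [hi, hj, hz i hi]
        simp [hj0]
        linarith
      · simp [hi, hj]
    have e1 : ∑ i, ∑ j ∈ G.neighborFinset i, min (x i) (x j) =
        ∑ i, ∑ j ∈ G.neighborFinset i, min (y i) (y j) + x k * (2 * (edgesIn G S : ℝ)) := by
      rw [← pairs_eq, Finset.mul_sum, ← Finset.sum_add_distrib]
      refine Finset.sum_congr rfl fun i _ => ?_
      rw [Finset.mul_sum, ← Finset.sum_add_distrib]
      exact Finset.sum_congr rfl fun j _ => hmm i j
    have e2 : ∑ i, x i = ∑ i, y i + x k * S.card := by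
      rw [Finset.sum_congr rfl fun i _ => hxy i, Finset.sum_add_distrib, ← Finset.mul_sum]
      simp
    have := mul_le_mul_of_nonneg_left (edgesIn_le G S hne) hkpos.le
    rw [e1, e2]
    linarith
  · have h0 : ∀ i, x i = 0 := fun i => by
      have h : ¬ 0 < x i := fun h => hne ⟨i, (memS i).2 h⟩
      exact le_antisymm (not_lt.1 h) (hx i)
    simp [h0]

theorem stmt4 [Fintype V] (G : SimpleGraph V)
    (c : ℕ) (hc : 1 ≤ c)
    (w : V → V → ℝ) (q : V → Fin c → ℝ)
    (hw : ∀ i j, 0 ≤ w i j) (hwsymm : ∀ i j, w i j = w j i)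
    (hq : ∀ i k, 0 ≤ q i k)
    (s sstar : V → Fin c)
    (hs : IsNash G (fun _ _ => True) (fun _ _ => 1) w q s) :
    welfare G (fun _ _ => True) (fun _ _ => 1) w q sstar ≤
      (1 + 2 * maxDensity G) * welfare G (fun _ _ => True) (fun _ _ => 1) w q s := by
  have hu : ∀ (t : V → Fin c) i, util G (fun _ _ => True) (fun _ _ => 1) w q t i =
      q i (t i) + ∑ j ∈ G.neighborFinset i, if t i = t j then w i j / 2 else 0 := by
    intro t i
    unfold util
    congr 1
    refine Finset.sum_congr rfl fun j _ => ?_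
    by_cases h : t i = t j
    · simp [h]; ring
    · simp [h]
  have hterm : ∀ (t : V → Fin c) i j, 0 ≤ if t i = t j then w i j / 2 else 0 := by
    intro t i j
    have := hw i j
    split_ifs <;> linarith
  set x : V → ℝ := util G (fun _ _ => True) (fun _ _ => 1) w q s with hxdef
  have hqx : ∀ i, q i (sstar i) ≤ x i := by
    intro i
    refine le_trans ?_ (hs i (sstar i))
    rw [hu]
    have := Finset.sum_nonneg fun j (_ : j ∈ G.neighborFinset i) =>
      hterm (Function.update s i (sstar i)) i j
    simp only [Function.update_self] at this ⊢
    linarith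
  have hwx : ∀ i j, G.Adj i j → w i j / 2 ≤ x i := by
    intro i j hij
    refine le_trans ?_ (hs i (s j))
    rw [hu]
    have h1 := Finset.single_le_sum (f := fun l => if Function.update s i (s j) i =
      Function.update s i (s j) l then w i l / 2 else 0) (fun l (_ : l ∈ G.neighborFinset i) =>
      hterm (Function.update s i (s j)) i l) ((G.mem_neighborFinset i j).2 hij)
    have h2 := hq i (Function.update s i (s j) i)
    have h3 : Function.update s i (s j) j = s j := Function.update_of_ne hij.ne' _ _
    simp only [h3, Function.update_self, if_true] at h1 h2 ⊢
    linarith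
  have hx : ∀ i, 0 ≤ x i := fun i => (hq i _).trans (hqx i)
  have key := min_sum_le G _ x hx rfl
  have hle : ∀ i, util G (fun _ _ => True) (fun _ _ => 1) w q sstar i ≤
      x i + ∑ j ∈ G.neighborFinset i, min (x i) (x j) := by
    intro i
    rw [hu]
    refine add_le_add (hqx i) (Finset.sum_le_sum fun j hj => ?_)
    have hij := (G.mem_neighborFinset i j).1 hj
    have h1 := hwx i j hij
    have h2 := hwx j i hij.symm
    rw [← hwsymm i j] at h2
    split_ifs
    · exact le_min h1 h2
    · exact le_min (hx i) (hx j)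
  have := Finset.sum_le_sum fun i (_ : i ∈ univ) => hle i
  rw [Finset.sum_add_distrib] at this
  unfold welfare
  rw [← hxdef]
  linarith
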